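/- arXiv:cs/0702079 — 2 statements merged into one kernel-verified Lean document; each statement's English description precedes it below -/
import Mathlib

section
/- For all integers n ≥ 2 and m ≥ n, there exist vectors v_0, v_1, …, v_n ∈ ℝ² such that the n+1 translates A_i = D_n^m + v_i (0 ≤ i ≤ n) have pairwise disjoint interiors, and A_0 touches every A_i for 1 ≤ i ≤ n, i.e., A_0 ∩ A_i ≠ ∅ for each 1 ≤ i ≤ n. -/
/-- The ruler sequence: `s i = v₂(i) + 1`. -/
def rulerSeq (i : ℕ) : ℕ := padicValNat 2 i + 1

/-- `yCoord i = y_i = ∑_{j=1}^{i-1} s j`. -/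
def yCoord (i : ℕ) : ℕ := ∑ j ∈ Finset.Ico 1 i, rulerSeq j

/-- The `i`-th bar of `D_n^m`: `[(i-1)m, im] × [y_i, y_i + 1]`. -/
def bar (m i : ℕ) : Set (ℝ × ℝ) :=
  Set.Icc (((i : ℝ) - 1) * m) ((i : ℝ) * m) ×ˢ Set.Icc ((yCoord i : ℝ)) ((yCoord i : ℝ) + 1)

/-- The `i`-th connector of `D_n^m`: `[im - 1, im] × [y_i + 1, y_{i+1} + 1]`. -/
def connector (m i : ℕ) : Set (ℝ × ℝ) :=
  Set.Icc ((i : ℝ) * m - 1) ((i : ℝ) * m) ×ˢ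
    Set.Icc ((yCoord i : ℝ) + 1) ((yCoord (i + 1) : ℝ) + 1)

/-- The region `D_n^m`: union of `2^n` bars and `2^n - 1` connectors. -/
def Dregion (n m : ℕ) : Set (ℝ × ℝ) :=
  (⋃ i ∈ Finset.Icc 1 (2 ^ n), bar m i) ∪ ⋃ i ∈ Finset.Icc 1 (2 ^ n - 1), connector m i

/-!
Write `s` for the ruler sequence and `y` for its partial sums, and put `j_i = 2^n - 2^i + 1`. For
`1 ≤ i ≤ n` the `i`-th copy is moved `j_i` columns to the right, then `i` units to the left and
`y_{j_i} + i + 1` units up, while the zeroth copy stays in place. Copies meeting in a column are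
stacked, the one of larger index on top:

* copy `i` over copy `0`: bar `p < 2^i` sits over bar `p + j_i`, and by periodicity of `s` below
  powers of two, `y_{p + j_i} = y_{j_i} + y_p + s_p`. Hence the gap between the two bars is
  `i - s_p`, which is nonnegative, and zero at `p = 2^(i-1)`, where the copies touch;
* copy `i` over copy `k`, for `1 ≤ k < i`: by periodicity `y_{j_k} - y_{j_i}` is the sum of the
  first `2^i - 2^k` terms of `s`, and no block of as many consecutive terms has a smaller sum,
  because the binomial coefficients are integers. Here the gap is at least `i - k - 1`.

The left shifts, increasing with the index and at most `m`, keep the connectors of the lower copy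
clear of the bars of the upper one.
-/

lemma padicValNat_add_eq_right {p i d j : ℕ} [Fact p.Prime] (hd : p ^ i ∣ d) (hj : ¬ p ^ i ∣ j) :
    padicValNat p (d + j) = padicValNat p j := by
  have hj0 : j ≠ 0 := by rintro rfl; exact hj (dvd_zero _)
  refine eq_of_forall_le_iff fun k ↦ ?_
  rw [← padicValNat_dvd_iff_le (by omega), ← padicValNat_dvd_iff_le hj0]
  rcases le_total k i with hk | hk
  · exact Nat.dvd_add_right ((pow_dvd_pow p hk).trans hd)
  · have hik : p ^ i ∣ p ^ k := pow_dvd_pow p hk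
    exact iff_of_false (fun h ↦ hj ((Nat.dvd_add_right hd).1 (hik.trans h)))
      fun h ↦ hj (hik.trans h)

lemma rulerSeq_add {i d j : ℕ} (hd : 2 ^ i ∣ d) (hj : ¬ 2 ^ i ∣ j) :
    rulerSeq (d + j) = rulerSeq j :=
  congrArg (· + 1) (padicValNat_add_eq_right hd hj)

lemma rulerSeq_two_pow (t : ℕ) : rulerSeq (2 ^ t) = t + 1 := by
  rw [rulerSeq, padicValNat.prime_pow]

lemma rulerSeq_le {i p : ℕ} (hp₀ : p ≠ 0) (hp : p < 2 ^ i) : rulerSeq p ≤ i :=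
  (padicValNat_le_nat_log p).trans_lt (Nat.log_lt_of_lt_pow hp₀ hp)

lemma yCoord_one : yCoord 1 = 0 := by simp [yCoord]

lemma yCoord_succ {i : ℕ} (hi : 0 < i) : yCoord (i + 1) = yCoord i + rulerSeq i :=
  Finset.sum_Ico_succ_top hi rulerSeq

lemma yCoord_mono : Monotone yCoord := fun _ _ h ↦
  Finset.sum_le_sum_of_subset (Finset.Ico_subset_Ico le_rfl h)

lemma yCoord_add_of_two_pow_dvd {i d r : ℕ} (hd : 2 ^ i ∣ d) (hr₀ : 0 < r) (hr : r ≤ 2 ^ i) :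
    yCoord (d + r) = yCoord (d + 1) + yCoord r := by
  induction r, hr₀ using Nat.le_induction with
  | base => simp [yCoord_one]
  | succ r hr₀ ih =>
    have hper : rulerSeq (d + r) = rulerSeq r := rulerSeq_add hd (Nat.not_dvd_of_pos_of_lt hr₀ hr)
    rw [← add_assoc, yCoord_succ (by omega), yCoord_succ hr₀, ih (by omega), hper, add_assoc]

open Nat in
lemma yCoord_succ_eq_add_padicValNat_factorial (u : ℕ) :
    yCoord (u + 1) = u + padicValNat 2 u ! := by
  induction u with
  | zero => simp [yCoord_one]
  | succ u ih =>
    rw [yCoord_succ u.succ_pos, ih, rulerSeq, Nat.factorial_succ,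
      padicValNat.mul u.succ_ne_zero u.factorial_ne_zero]
    ring

lemma yCoord_add_yCoord_succ_le {a : ℕ} (ha : 0 < a) (b : ℕ) :
    yCoord a + yCoord (b + 1) ≤ yCoord (a + b) := by
  obtain ⟨a, rfl⟩ := Nat.exists_eq_add_one.2 ha
  have hval := (padicValNat_dvd_iff_le (a + b).factorial_ne_zero).1
    ((pow_padicValNat_dvd (p := 2)).trans (Nat.factorial_mul_factorial_dvd_factorial_add a b))
  rw [padicValNat.mul a.factorial_ne_zero b.factorial_ne_zero] at hval
  rw [add_right_comm]
  simp only [yCoord_succ_eq_add_padicValNat_factorial]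
  omega

lemma disjoint_interior_of_dense {X : Type*} [TopologicalSpace X] {S A B : Set X} (hS : Dense S)
    (h : Disjoint S (A ∩ B)) : Disjoint (interior A) (interior B) := by
  rw [Set.disjoint_iff_inter_eq_empty, ← interior_inter, interior_eq_empty_iff_dense_compl]
  exact hS.mono h.subset_compl_right

lemma int_lt_of_le_irrational_of_le {x : ℝ} (hx : Irrational x) {a b : ℤ} (ha : a ≤ x)
    (hb : x ≤ b) : a < b := by
  have hax : (a : ℝ) < x := ha.lt_of_ne' (hx.ne_int a)
  exact_mod_cast hax.trans_le hb

lemma mem_image_add_right_iff {G : Type*} [AddGroup G] {D : Set G} {v z : G} :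
    z ∈ (· + v) '' D ↔ z - v ∈ D := by
  rw [Set.image_add_right, Set.mem_preimage, sub_eq_add_neg]

lemma mem_Dregion {n m : ℕ} {z : ℝ × ℝ} :
    z ∈ Dregion n m ↔
      (∃ i ∈ Set.Icc 1 (2 ^ n), z ∈ bar m i) ∨ ∃ i ∈ Set.Icc 1 (2 ^ n - 1), z ∈ connector m i := by
  simp [Dregion]

lemma exists_bar_below {n m : ℕ} (hm : 1 ≤ m) {x y : ℝ} (h : (x, y) ∈ Dregion n m) :
    ∃ p ∈ Set.Icc (1 : ℕ) (2 ^ n), ((p : ℝ) - 1) * m ≤ x ∧ x ≤ p * m ∧ yCoord p ≤ y := by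
  have hm' : (1 : ℝ) ≤ m := by exact_mod_cast hm
  obtain ⟨i, hi, ⟨hx₁, hx₂⟩, hy, -⟩ | ⟨i, hi, ⟨hx₁, hx₂⟩, hy, -⟩ := mem_Dregion.1 h
  · exact ⟨i, hi, hx₁, hx₂, hy⟩
  · exact ⟨i, ⟨hi.1, hi.2.trans (Nat.sub_le _ _)⟩, by linarith, hx₂, by linarith⟩

-- The column is widened by `1` on the left since the connector leading up to bar `q` starts there.
lemma exists_bar_above {n m : ℕ} {x y : ℝ} (h : (x, y) ∈ Dregion n m) :
    ∃ q ∈ Set.Icc (1 : ℕ) (2 ^ n), ((q : ℝ) - 1) * m - 1 ≤ x ∧ x ≤ q * m ∧ y ≤ yCoord q + 1 := by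
  obtain ⟨i, hi, ⟨hx₁, hx₂⟩, -, hy⟩ | ⟨i, hi, ⟨hx₁, hx₂⟩, -, hy⟩ := mem_Dregion.1 h
  · exact ⟨i, hi, by linarith, hx₂, hy⟩
  · have hi₂ : i + 1 ≤ 2 ^ n := Nat.add_le_of_le_sub Nat.one_le_two_pow hi.2
    refine ⟨i + 1, ⟨by omega, hi₂⟩, ?_, ?_, hy⟩ <;> push_cast
    · linarith
    · nlinarith [m.cast_nonneg (α := ℝ)]

lemma eq_or_eq_succ_of_columns_overlap {m e f P Q : ℤ} (hfe : f < e) (hef : e ≤ f + m)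
    (hPQ : (P - 1) * m - e < Q * m - f) (hQP : (Q - 1) * m - f - 1 < P * m - e) :
    P = Q ∨ P = Q + 1 := by
  have hm : 0 < m := by omega
  have hP : P - 1 - Q < 1 := lt_of_mul_lt_mul_right (by linarith) hm.le
  have hQ : Q - 1 - P < 0 := lt_of_mul_lt_mul_right (by linarith) hm.le
  omega

lemma add_lt_add_of_adjacent_columns {y : ℕ → ℕ} (hy : Monotone y) {N a b h k p q : ℕ}
    (hab : a < b + N)
    (hbars : ∀ p ∈ Set.Icc 1 N, ∀ q ∈ Set.Icc 1 N, p + a = q + b → y q + k < y p + h)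
    (hp : p ∈ Set.Icc 1 N) (hq : q ∈ Set.Icc 1 N) (hpq : p + a = q + b ∨ p + a = q + b + 1) :
    y q + k < y p + h := by
  obtain ⟨hp₁, hpN⟩ := hp
  obtain ⟨hq₁, hqN⟩ := hq
  rcases hpq with hpq | hpq
  · exact hbars p ⟨hp₁, hpN⟩ q ⟨hq₁, hqN⟩ hpq
  rcases hqN.lt_or_eq with hqN | rfl
  · calc
      y q + k ≤ y (q + 1) + k := by gcongr; exact hy q.le_succ
      _ < y p + h := hbars p ⟨hp₁, hpN⟩ (q + 1) ⟨by omega, hqN⟩ (by omega)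
  · calc
      y q + k < y (p - 1) + h := hbars (p - 1) ⟨by omega, by omega⟩ q ⟨hq₁, le_rfl⟩ (by omega)
      _ ≤ y p + h := by gcongr; exact hy p.pred_le

lemma disjoint_interior_translates {n m a b e f h k : ℕ} (hfe : f < e) (hef : e ≤ f + m)
    (hab : a < b + 2 ^ n)
    (hbars : ∀ p ∈ Set.Icc 1 (2 ^ n), ∀ q ∈ Set.Icc 1 (2 ^ n), p + a = q + b →
      yCoord q + k < yCoord p + h) :
    Disjoint (interior ((· + ((a * m - e, h) : ℝ × ℝ)) '' Dregion n m))
      (interior ((· + ((b * m - f, k) : ℝ × ℝ)) '' Dregion n m)) := by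
  -- All corners are integral, so a point with irrational coordinates lies on no edge.
  refine disjoint_interior_of_dense (dense_irrational.prod dense_irrational)
    (Set.disjoint_left.2 ?_)
  rintro ⟨x, y⟩ ⟨hx, hy⟩ ⟨hA, hB⟩
  rw [mem_image_add_right_iff, Prod.mk_sub_mk] at hA hB
  obtain ⟨p, hp, hpx₁, hpx₂, hpy⟩ := exists_bar_below (by omega) hA
  obtain ⟨q, hq, hqx₁, hqx₂, hqy⟩ := exists_bar_above hB
  have hPQ : ((p + a : ℤ) - 1) * m - e < (q + b : ℤ) * m - f :=
    int_lt_of_le_irrational_of_le hx (by push_cast; linarith) (by push_cast; linarith)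
  have hQP : ((q + b : ℤ) - 1) * m - f - 1 < (p + a : ℤ) * m - e :=
    int_lt_of_le_irrational_of_le hx (by push_cast; linarith) (by push_cast; linarith)
  have hlow : (yCoord p + h : ℤ) < yCoord q + 1 + k :=
    int_lt_of_le_irrational_of_le hy (by push_cast; linarith) (by push_cast; linarith)
  have hcols := eq_or_eq_succ_of_columns_overlap (by omega) (by omega) hPQ hQP
  have hhigh := add_lt_add_of_adjacent_columns yCoord_mono hab hbars hp hq (by omega)
  omega

lemma translates_inter_nonempty {n m a b e f h k p q : ℕ} (hfe : f ≤ e) (hef : e ≤ f + m)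
    (hp : p ∈ Set.Icc 1 (2 ^ n)) (hq : q ∈ Set.Icc 1 (2 ^ n)) (hpq : p + a = q + b)
    (hy : yCoord q + 1 + k = yCoord p + h) :
    (((· + ((b * m - f, k) : ℝ × ℝ)) '' Dregion n m) ∩
      ((· + ((a * m - e, h) : ℝ × ℝ)) '' Dregion n m)).Nonempty := by
  have hfe' : (f : ℝ) ≤ e := by exact_mod_cast hfe
  have hef' : (e : ℝ) ≤ f + m := by exact_mod_cast hef
  have hpq' : (p : ℝ) = q + b - a := eq_sub_of_add_eq (by exact_mod_cast hpq)
  have hy' : (yCoord q : ℝ) + 1 + k = yCoord p + h := by exact_mod_cast hy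
  -- The top left corner of bar `q` of the lower copy.
  refine ⟨((q + b - 1) * m - f, yCoord q + 1 + k), ?_, ?_⟩ <;>
    rw [mem_image_add_right_iff, Prod.mk_sub_mk, mem_Dregion]
  · refine .inl ⟨q, hq, ⟨?_, ?_⟩, ?_, ?_⟩ <;> dsimp only <;> linarith
  · refine .inl ⟨p, hp, ⟨?_, ?_⟩, ?_, ?_⟩ <;> simp only [hpq'] <;> linarith

/-- The number `j_i` of columns by which the `i`-th copy of `D_n^m` is moved to the right, meant for
`i ≤ n`, where the subtraction is not truncated. -/
def columnShift (n : ℕ) : ℕ → ℕ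
  | 0 => 0
  | i + 1 => 2 ^ n - 2 ^ (i + 1) + 1

/-- The height by which the `i`-th copy of `D_n^m` is raised. -/
def heightShift (n : ℕ) : ℕ → ℕ
  | 0 => 0
  | i + 1 => yCoord (columnShift n (i + 1)) + (i + 1) + 1

/-- The vector `v_i` taking `D_n^m` to its `i`-th copy. -/
def translation (n m i : ℕ) : ℝ × ℝ := (columnShift n i * m - i, heightShift n i)

lemma columnShift_of_pos (n : ℕ) {i : ℕ} (hi : 0 < i) : columnShift n i = 2 ^ n - 2 ^ i + 1 := by
  obtain ⟨i, rfl⟩ := Nat.exists_eq_add_one.2 hi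
  rfl

lemma heightShift_zero (n : ℕ) : heightShift n 0 = 0 := rfl

lemma heightShift_of_pos (n : ℕ) {i : ℕ} (hi : 0 < i) :
    heightShift n i = yCoord (columnShift n i) + i + 1 := by
  obtain ⟨i, rfl⟩ := Nat.exists_eq_add_one.2 hi
  rfl

lemma yCoord_add_columnShift {n i p : ℕ} (hi : 0 < i) (hin : i ≤ n) (hp : p < 2 ^ i) :
    yCoord (p + columnShift n i) = yCoord (columnShift n i) + yCoord (p + 1) := by
  have hdvd : 2 ^ i ∣ 2 ^ n - 2 ^ i := Nat.dvd_sub (pow_dvd_pow 2 hin) dvd_rfl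
  rw [columnShift_of_pos n hi, ← yCoord_add_of_two_pow_dvd hdvd p.succ_pos hp]
  congr 1
  omega

lemma yCoord_add_columnShift_add_one {n i p : ℕ} (hi : 0 < i) (hin : i ≤ n) (hp₀ : 0 < p)
    (hp : p < 2 ^ i) :
    yCoord (p + columnShift n i) + (i + 1) = yCoord p + heightShift n i + rulerSeq p := by
  rw [yCoord_add_columnShift hi hin hp, yCoord_succ hp₀, heightShift_of_pos n hi]
  ring

lemma yCoord_columnShift_of_lt {n i k : ℕ} (hk : 0 < k) (hki : k < i) (hin : i ≤ n) :
    yCoord (columnShift n k) = yCoord (columnShift n i) + yCoord (2 ^ i - 2 ^ k + 1) := by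
  have hik : 2 ^ k ≤ 2 ^ i := Nat.pow_le_pow_right two_pos hki.le
  have hni : 2 ^ i ≤ 2 ^ n := Nat.pow_le_pow_right two_pos hin
  have hk₁ : 0 < 2 ^ k := by positivity
  rw [← yCoord_add_columnShift (hk.trans hki) hin (by omega), columnShift_of_pos n hk,
    columnShift_of_pos n (hk.trans hki)]
  congr 1
  omega

lemma yCoord_add_heightShift_lt {n i k p q : ℕ} (hki : k < i) (hin : i ≤ n) (hp : 0 < p)
    (hq : q ∈ Set.Icc 1 (2 ^ n)) (hpq : p + columnShift n i = q + columnShift n k) :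
    yCoord q + heightShift n k < yCoord p + heightShift n i := by
  have hi : 0 < i := by omega
  have hni : 2 ^ i ≤ 2 ^ n := Nat.pow_le_pow_right two_pos hin
  have hcol := columnShift_of_pos n hi
  rcases k.eq_zero_or_pos with rfl | hk
  · obtain rfl : p + columnShift n i = q := hpq
    have hpi : p < 2 ^ i := by have := hq.2; omega
    have hgap := yCoord_add_columnShift_add_one hi hin hp hpi
    have hstep : rulerSeq p ≤ i := rulerSeq_le hp.ne' hpi
    rw [heightShift_zero]
    omega
  · have hik : 2 ^ k ≤ 2 ^ i := Nat.pow_le_pow_right two_pos hki.le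
    obtain rfl : p = q + (2 ^ i - 2 ^ k) := by
      rw [columnShift_of_pos n hk] at hpq
      omega
    have hblock := yCoord_add_yCoord_succ_le hq.1 (2 ^ i - 2 ^ k)
    rw [heightShift_of_pos n hi, heightShift_of_pos n hk, yCoord_columnShift_of_lt hk hki hin]
    omega

lemma disjoint_interior_translation {n m i k : ℕ} (hki : k < i) (hin : i ≤ n) (him : i ≤ m) :
    Disjoint (interior ((· + translation n m i) '' Dregion n m))
      (interior ((· + translation n m k) '' Dregion n m)) := by
  have hcol : columnShift n i < columnShift n k + 2 ^ n := by
    have hi : 2 ^ 1 ≤ 2 ^ i := Nat.pow_le_pow_right two_pos (by omega)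
    have hni : 2 ^ i ≤ 2 ^ n := Nat.pow_le_pow_right two_pos hin
    rw [columnShift_of_pos n (by omega)]
    omega
  exact disjoint_interior_translates hki (by omega) hcol
    fun p hp q hq ↦ yCoord_add_heightShift_lt hki hin hp.1 hq

lemma translation_inter_nonempty {n m i : ℕ} (hi : 0 < i) (hin : i ≤ n) (him : i ≤ m) :
    (((· + translation n m 0) '' Dregion n m) ∩
      ((· + translation n m i) '' Dregion n m)).Nonempty := by
  obtain ⟨t, rfl⟩ := Nat.exists_eq_add_one.2 hi
  have hpos : 0 < 2 ^ t := by positivity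
  have hlt : 2 ^ t < 2 ^ (t + 1) := Nat.pow_lt_pow_right one_lt_two t.lt_succ_self
  have hle : 2 ^ (t + 1) ≤ 2 ^ n := Nat.pow_le_pow_right two_pos hin
  have hcol := columnShift_of_pos n hi
  have hgap := yCoord_add_columnShift_add_one hi hin hpos hlt
  rw [rulerSeq_two_pow] at hgap
  refine translates_inter_nonempty (p := 2 ^ t) (q := 2 ^ t + columnShift n (t + 1)) (Nat.zero_le _)
    (by omega) ⟨hpos, by omega⟩ ⟨by omega, by omega⟩ rfl ?_
  rw [heightShift_zero]
  omega

theorem hadwiger_unbounded_construction (n m : ℕ) (hn : 2 ≤ n) (hm : n ≤ m) :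
    ∃ v : Fin (n + 1) → ℝ × ℝ,
      (∀ i j : Fin (n + 1), i ≠ j →
        Disjoint (interior ((· + v i) '' Dregion n m))
          (interior ((· + v j) '' Dregion n m))) ∧
      (∀ i : Fin (n + 1), i ≠ 0 →
        (((· + v 0) '' Dregion n m) ∩ ((· + v i) '' Dregion n m)).Nonempty) := by
  refine ⟨fun i ↦ translation n m i, fun i j hij ↦ ?_, fun i hi ↦ ?_⟩
  · rcases hij.lt_or_gt with hlt | hgt
    · exact (disjoint_interior_translation hlt j.is_le (j.is_le.trans hm)).symm
    · exact disjoint_interior_translation hgt i.is_le (i.is_le.trans hm)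
  · exact translation_inter_nonempty (Fin.pos_iff_ne_zero.2 hi) i.is_le (i.is_le.trans hm)
end

section
/- For every n > 0 there exist a compact set A_0 ⊆ ℝ² that is homeomorphic (as a subspace of ℝ²) to the closed unit disk {x ∈ ℝ² : ‖x‖ ≤ 1}, and vectors v_1, …, v_n ∈ ℝ², such that the sets A_0, A_1 = A_0 + v_1, …, A_n = A_0 + v_n have pairwise disjoint interiors, while A_0 ∩ A_i ≠ ∅ for every 1 ≤ i ≤ n. Consequently, the Hadwiger number of planar topological disks is not bounded by any constant. -/
/-!
Fix `N ≥ 4 n + 2`. Let `φ` be a nonnegative profile with successive tents of heights `0, 2, …, 2 n`,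
the `l`-th one living in `[N ^ l, N ^ (l + 1) - N ^ l]` with slopes `± 1 / N ^ l`, and let the disk
be the band of thickness `1` above the graph of `φ` over `[0, 2 N ^ (n + 1)]`. The `i`-th translate
is moved so that its right part, where `φ = 0`, lies at height `2 i + 1` above `[0, N ^ (i + 1)]`:
there the profile is at most `2 i`, and the `i`-th peak of the disk touches the translate.

For `j < i` the translates are offset horizontally by `d = N ^ (i + 1) - N ^ (j + 1)` and vertically
by at least `2`, so they do not overlap as long as `φ` grows by at most `1` over a distance `d`. The
tents `l > i` are flat enough for that, and the tents `l ≤ i` of the `j`-th translate lie to the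
left of the `i`-th one.
-/

open Set

namespace StackedBands

/-- The Euclidean plane. -/
abbrev Plane := EuclideanSpace ℝ (Fin 2)

section ConvexBody

theorem nonempty_homeomorph_unitBall_of_convex {E : Type*} [NormedAddCommGroup E]
    [NormedSpace ℝ E] {s : Set E} (hconv : Convex ℝ s) (hcomp : IsCompact s)
    (hint : (interior s).Nonempty) : Nonempty (s ≃ₜ {x : E | ‖x‖ ≤ 1}) := by
  obtain ⟨e, -, he, -⟩ :=
    exists_homeomorph_image_interior_closure_frontier_eq_unitBall hconv hint hcomp.isBounded
  have himage : e '' s = {x : E | ‖x‖ ≤ 1} := by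
    rw [← hcomp.isClosed.closure_eq, he]
    ext x
    exact mem_closedBall_zero_iff
  exact ⟨(e.image s).trans (Homeomorph.setCongr himage)⟩

variable {ι : Type*}

/-- The coordinate box `∏ i, [a i, b i]` in Euclidean space. -/
def box (a b : ι → ℝ) : Set (EuclideanSpace ℝ ι) :=
  EuclideanSpace.equiv ι ℝ ⁻¹' Icc a b

theorem isCompact_box (a b : ι → ℝ) : IsCompact (box a b) :=
  (EuclideanSpace.equiv ι ℝ).toHomeomorph.isCompact_preimage.2 isCompact_Icc

theorem convex_box (a b : ι → ℝ) : Convex ℝ (box a b) :=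
  (convex_Icc a b).linear_preimage (EuclideanSpace.equiv ι ℝ).toLinearMap

theorem interior_box_nonempty [Finite ι] {a b : ι → ℝ} (hab : ∀ i, a i < b i) :
    (interior (box a b)).Nonempty := by
  have hIcc : (interior (Icc a b)).Nonempty := by
    rw [← pi_univ_Icc, interior_pi_set finite_univ, univ_pi_nonempty_iff]
    simpa only [interior_Icc, nonempty_Ioo] using hab
  have hbox : interior (box a b) = EuclideanSpace.equiv ι ℝ ⁻¹' interior (Icc a b) :=
    ((EuclideanSpace.equiv ι ℝ).toHomeomorph.preimage_interior _).symm
  rw [hbox]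
  exact hIcc.preimage (EuclideanSpace.equiv ι ℝ).surjective

end ConvexBody

section Band

variable {a b c d : ℝ} {f g : ℝ → ℝ}

/-- The band of thickness `1` above the graph of `f` over `[a, b]`. -/
def band (a b : ℝ) (f : ℝ → ℝ) : Set Plane :=
  {p | p 0 ∈ Icc a b ∧ p 1 ∈ Icc (f (p 0)) (f (p 0) + 1)}

/-- The vertical shear `(x, y) ↦ (x, y + f x)` of the plane, carrying boxes to bands. -/
@[simps]
def shear (hf : Continuous f) : Plane ≃ₜ Plane where
  toFun p := !₂[p 0, p 1 + f (p 0)]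
  invFun p := !₂[p 0, p 1 - f (p 0)]
  left_inv p := by ext k; fin_cases k <;> simp
  right_inv p := by ext k; fin_cases k <;> simp
  continuous_toFun := by
    refine (PiLp.continuous_toLp 2 _).comp (continuous_pi (Fin.forall_fin_two.2 ⟨?_, ?_⟩))
    · exact PiLp.continuous_apply 2 _ 0
    · change Continuous fun p : Plane => p 1 + f (p 0)
      fun_prop
  continuous_invFun := by
    refine (PiLp.continuous_toLp 2 _).comp (continuous_pi (Fin.forall_fin_two.2 ⟨?_, ?_⟩))
    · exact PiLp.continuous_apply 2 _ 0
    · change Continuous fun p : Plane => p 1 - f (p 0)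
      fun_prop

theorem shear_preimage_band (hf : Continuous f) :
    shear hf ⁻¹' band a b f = box ![a, 0] ![b, 1] := by
  ext p
  simp [band, box, Pi.le_def, Fin.forall_fin_two, add_comm _ (f _), and_and_and_comm]

theorem image_shear_box (hf : Continuous f) :
    shear hf '' box ![a, 0] ![b, 1] = band a b f := by
  rw [← shear_preimage_band hf, (shear hf).surjective.image_preimage]

theorem isCompact_band (hf : Continuous f) : IsCompact (band a b f) := by
  rw [← image_shear_box hf]
  exact (isCompact_box _ _).image (shear hf).continuous

theorem nonempty_band_homeomorph_unitBall (hf : Continuous f) (hab : a < b) :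
    Nonempty (band a b f ≃ₜ {x : Plane | ‖x‖ ≤ 1}) := by
  obtain ⟨e⟩ := nonempty_homeomorph_unitBall_of_convex (convex_box ![a, 0] ![b, 1])
    (isCompact_box _ _) (interior_box_nonempty (Fin.forall_fin_two.2 ⟨hab, zero_lt_one⟩))
  rw [← image_shear_box hf]
  exact ⟨((shear hf).image _).symm.trans e⟩

theorem image_add_band (v : Plane) :
    (· + v) '' band a b f = band (a + v 0) (b + v 0) (fun x => f (x - v 0) + v 1) := by
  ext p
  simp only [image_add_right, ← sub_eq_add_neg, mem_preimage, band, mem_ofPred_eq, mem_Icc,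
    PiLp.sub_apply, le_sub_iff_add_le, sub_le_iff_le_add, add_right_comm _ (1 : ℝ)]

theorem disjoint_interior_of_forall_le {A B : Set Plane}
    (h : ∀ p ∈ A, ∀ q ∈ B, p 0 = q 0 → p 1 ≤ q 1) : Disjoint (interior A) (interior B) := by
  refine Set.disjoint_left.2 fun p hpA hpB => ?_
  let raised (r : ℝ) : Plane := p + r • !₂[0, 1]
  have hraised : Continuous raised := by fun_prop
  have hnhds : ∀ᶠ r in nhds 0, raised r ∈ interior A :=
    hraised.continuousAt.eventually_mem (isOpen_interior.mem_nhds (by simpa [raised] using hpA))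
  obtain ⟨r, hr, hr0⟩ :=
    ((hnhds.filter_mono nhdsWithin_le_nhds).and (self_mem_nhdsWithin (s := Ioi 0))).exists
  have hle : raised r 1 ≤ p 1 :=
    h _ (interior_subset hr) _ (interior_subset hpB) (by simp [raised])
  have hlt : p 1 < raised r 1 := by simpa [raised] using hr0
  exact hle.not_gt hlt

theorem disjoint_interior_band
    (h : ∀ x ∈ Icc a b ∩ Icc c d, f x + 1 ≤ g x) :
    Disjoint (interior (band a b f)) (interior (band c d g)) := by
  refine disjoint_interior_of_forall_le fun p hp q hq hpq => ?_
  obtain ⟨hpx, -, hpy⟩ := hp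
  obtain ⟨hqx, hqy, -⟩ := hq
  rw [← hpq] at hqx hqy
  exact hpy.trans ((h _ ⟨hpx, hqx⟩).trans hqy)

theorem band_inter_band_nonempty {x : ℝ} (hx : x ∈ Icc a b ∩ Icc c d) (h : g x = f x + 1) :
    (band a b f ∩ band c d g).Nonempty :=
  ⟨!₂[x, g x], ⟨hx.1, by simp [h]⟩, ⟨hx.2, by simp⟩⟩

end Band

section Tent

variable {h w s t : ℝ}

/-- The tent of height `h` with peak at `(h + 1) * w` and slopes `± 1 / w`. It is supported on
`[w, (2 * h + 1) * w]`. -/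
noncomputable def tent (h w s : ℝ) : ℝ :=
  max 0 (h - |s / w - (h + 1)|)

theorem continuous_tent (h w : ℝ) : Continuous (tent h w) := by
  unfold tent
  fun_prop

theorem tent_nonneg (h w s : ℝ) : 0 ≤ tent h w s :=
  le_max_left _ _

theorem tent_le_height (hh : 0 ≤ h) (w s : ℝ) : tent h w s ≤ h :=
  max_le hh (sub_le_self h (abs_nonneg _))

theorem height_le_tent_peak (h : ℝ) (hw : w ≠ 0) : h ≤ tent h w ((h + 1) * w) := by
  simp [tent, hw]

theorem tent_eq_zero_of_le (hw : 0 < w) (hs : s ≤ w) : tent h w s = 0 := by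
  have hsw : s / w ≤ 1 := (div_le_one hw).2 hs
  refine max_eq_left ?_
  linarith [neg_abs_le (s / w - (h + 1))]

theorem tent_eq_zero_of_ge (hw : 0 < w) (hs : (2 * h + 1) * w ≤ s) : tent h w s = 0 := by
  have hsw : 2 * h + 1 ≤ s / w := (le_div_iff₀ hw).2 hs
  refine max_eq_left ?_
  linarith [le_abs_self (s / w - (h + 1))]

theorem tent_le_tent_add_one (hw : 0 < w) (hst : |s - t| ≤ w) :
    tent h w s ≤ tent h w t + 1 := by
  have hdist : |s / w - t / w| ≤ 1 := by
    rw [← sub_div, abs_div, abs_of_pos hw]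
    exact (div_le_one hw).2 hst
  have habs : |t / w - (h + 1)| ≤ |s / w - (h + 1)| + 1 := by
    linarith [abs_sub_le (t / w) (s / w) (h + 1), abs_sub_comm (t / w) (s / w)]
  have htent : h - |t / w - (h + 1)| ≤ tent h w t := le_max_right _ _
  exact max_le (by linarith [tent_nonneg h w t]) (by linarith)

end Tent

section Profile

variable {N : ℝ} {n i l : ℕ} {s t : ℝ}

/-- The upper envelope of the tents of height `2 * l` and width parameter `N ^ l`, `l ≤ n`. For
`4 * n + 2 ≤ N` their supports do not overlap, and that of the `l`-th tent ends at least `N ^ l`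
before `N ^ (l + 1)`. -/
noncomputable def profile (N : ℝ) (n : ℕ) (s : ℝ) : ℝ :=
  (Finset.range (n + 1)).sup' Finset.nonempty_range_add_one fun l => tent (2 * l) (N ^ l) s

theorem continuous_profile (N : ℝ) (n : ℕ) : Continuous (profile N n) :=
  Continuous.finset_sup'_apply _ fun _ _ => continuous_tent _ _

theorem tent_le_profile (N : ℝ) (hl : l ≤ n) (s : ℝ) :
    tent (2 * l) (N ^ l) s ≤ profile N n s :=
  Finset.le_sup' (fun l : ℕ => tent (2 * l) (N ^ l) s) (Finset.mem_range_succ_iff.2 hl)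

theorem profile_le {B : ℝ} (h : ∀ l ≤ n, tent (2 * l) (N ^ l) s ≤ B) : profile N n s ≤ B :=
  Finset.sup'_le _ _ fun l hl => h l (Finset.mem_range_succ_iff.1 hl)

theorem profile_nonneg (N : ℝ) (n : ℕ) (s : ℝ) : 0 ≤ profile N n s :=
  (tent_nonneg _ _ s).trans (tent_le_profile N n.zero_le s)

theorem profile_le_two_mul (hN : 1 ≤ N) (hs : s ≤ N ^ (i + 1)) : profile N n s ≤ 2 * i := by
  refine profile_le fun l _ => ?_
  rcases le_or_gt l i with hli | hil
  · calc tent (2 * l) (N ^ l) s ≤ 2 * l := tent_le_height (by positivity) _ _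
      _ ≤ 2 * i := by gcongr
  · rw [tent_eq_zero_of_le (by positivity) (hs.trans (pow_le_pow_right₀ hN hil))]
    positivity

theorem one_le_of_four_mul_add_two_le (hN : 4 * n + 2 ≤ N) : 1 ≤ N := by
  linarith [n.cast_nonneg (α := ℝ)]

theorem tent_end_le (hN : 4 * n + 2 ≤ N) (hl : l ≤ n) (hli : l ≤ i) :
    (2 * (2 * l) + 1) * N ^ l ≤ N ^ (i + 1) - N ^ i := by
  have hN1 : 1 ≤ N := one_le_of_four_mul_add_two_le hN
  have hln : (l : ℝ) ≤ n := by exact_mod_cast hl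
  calc (2 * (2 * l) + 1) * N ^ l ≤ (N - 1) * N ^ i := by
        gcongr; linarith
    _ = N ^ (i + 1) - N ^ i := by ring

theorem profile_eq_zero (hN : 4 * n + 2 ≤ N) (hs : N ^ (n + 1) ≤ s) : profile N n s = 0 := by
  have hN1 : 1 ≤ N := one_le_of_four_mul_add_two_le hN
  refine le_antisymm (profile_le fun l hl => (tent_eq_zero_of_ge (by positivity) ?_).le)
    (profile_nonneg N n s)
  have hpow : 0 ≤ N ^ n := by positivity
  linarith [tent_end_le hN hl hl]

theorem peak_le (hN : 4 * n + 2 ≤ N) (hi : i ≤ n) : (2 * i + 1) * N ^ i ≤ N ^ (i + 1) := by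
  have hN1 : 1 ≤ N := one_le_of_four_mul_add_two_le hN
  have hin : (i : ℝ) ≤ n := by exact_mod_cast hi
  rw [pow_succ']
  gcongr
  linarith

theorem profile_peak (hN : 4 * n + 2 ≤ N) (hi : i ≤ n) :
    profile N n ((2 * i + 1) * N ^ i) = 2 * i := by
  have hN1 : 1 ≤ N := one_le_of_four_mul_add_two_le hN
  exact le_antisymm (profile_le_two_mul hN1 (peak_le hN hi))
    ((height_le_tent_peak _ (by positivity)).trans (tent_le_profile N hi _))

theorem profile_le_profile_add_one (hN : 4 * n + 2 ≤ N) (hs : N ^ (i + 1) - N ^ i ≤ s)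
    (hst : |s - t| ≤ N ^ (i + 1)) : profile N n s ≤ profile N n t + 1 := by
  have hN1 : 1 ≤ N := one_le_of_four_mul_add_two_le hN
  refine profile_le fun l hl => ?_
  rcases le_or_gt l i with hli | hil
  · rw [tent_eq_zero_of_ge (by positivity) ((tent_end_le hN hl hli).trans hs)]
    linarith [profile_nonneg N n t]
  · calc tent (2 * l) (N ^ l) s ≤ tent (2 * l) (N ^ l) t + 1 :=
          tent_le_tent_add_one (by positivity) (hst.trans (pow_le_pow_right₀ hN1 hil))
      _ ≤ profile N n t + 1 := by gcongr; exact tent_le_profile N hl t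

end Profile

section Translates

variable {N : ℝ} {n i j : ℕ}

/-- The topological disk whose translates are arranged around it. Its right half lies over an
interval where the profile vanishes. -/
def disk (N : ℝ) (n : ℕ) : Set Plane :=
  band 0 (2 * N ^ (n + 1)) (profile N n)

/-- The vector that moves the lower right corner of `disk N n` to `(N ^ (i + 1), 2 * i + 1)`. -/
def offset (N : ℝ) (n i : ℕ) : Plane :=
  !₂[N ^ (i + 1) - 2 * N ^ (n + 1), 2 * i + 1]

theorem image_add_offset (N : ℝ) (n i : ℕ) :
    (· + offset N n i) '' disk N n =
      band (N ^ (i + 1) - 2 * N ^ (n + 1)) (N ^ (i + 1))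
        (fun x => profile N n (x - (N ^ (i + 1) - 2 * N ^ (n + 1))) + (2 * i + 1)) := by
  rw [disk, image_add_band]
  simp [offset]

theorem disjoint_interior_disk_translate (hN : 1 ≤ N) (i : ℕ) :
    Disjoint (interior (disk N n)) (interior ((· + offset N n i) '' disk N n)) := by
  rw [image_add_offset]
  refine disjoint_interior_band fun x ⟨_, _, hx⟩ => ?_
  linarith [profile_le_two_mul (n := n) hN hx,
    profile_nonneg N n (x - (N ^ (i + 1) - 2 * N ^ (n + 1)))]

theorem disjoint_interior_translates (hN : 4 * n + 2 ≤ N) (hji : j < i) :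
    Disjoint (interior ((· + offset N n j) '' disk N n))
      (interior ((· + offset N n i) '' disk N n)) := by
  have hN1 : 1 ≤ N := one_le_of_four_mul_add_two_le hN
  rw [image_add_offset, image_add_offset]
  refine disjoint_interior_band fun x ⟨_, hx, _⟩ => ?_
  have hpow : N ^ (j + 1) ≤ N ^ i := pow_le_pow_right₀ hN1 hji
  have hpow_succ : N ^ i ≤ N ^ (i + 1) := pow_le_pow_right₀ hN1 i.le_succ
  have hpos : 0 ≤ N ^ (j + 1) := by positivity
  have hgrowth : profile N n (x - (N ^ (j + 1) - 2 * N ^ (n + 1))) ≤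
      profile N n (x - (N ^ (i + 1) - 2 * N ^ (n + 1))) + 1 := by
    refine profile_le_profile_add_one (i := i) hN (by linarith) ?_
    rw [abs_le]
    constructor <;> linarith
  have hji_cast : (j : ℝ) + 1 ≤ i := by exact_mod_cast hji
  linarith

theorem disk_inter_translate_nonempty (hN : 4 * n + 2 ≤ N) (hi : i ≤ n) :
    (disk N n ∩ (· + offset N n i) '' disk N n).Nonempty := by
  have hN1 : 1 ≤ N := one_le_of_four_mul_add_two_le hN
  have hpeak : (2 * i + 1) * N ^ i ≤ N ^ (i + 1) := peak_le hN hi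
  have hpeak0 : 0 ≤ (2 * i + 1) * N ^ i := by positivity
  have hpow : N ^ (i + 1) ≤ N ^ (n + 1) := pow_le_pow_right₀ hN1 (by lia)
  rw [image_add_offset]
  refine band_inter_band_nonempty (x := (2 * i + 1) * N ^ i)
    ⟨⟨hpeak0, by linarith⟩, by linarith, hpeak⟩ ?_
  rw [profile_peak hN hi, profile_eq_zero hN (by linarith)]
  ring

end Translates

end StackedBands

open StackedBands in
theorem hadwiger_number_of_topological_disks_unbounded (n : ℕ) (hn : 0 < n) :
    ∃ (A₀ : Set (EuclideanSpace ℝ (Fin 2))) (v : Fin n → EuclideanSpace ℝ (Fin 2)),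
      IsCompact A₀ ∧
      Nonempty (A₀ ≃ₜ ({x : EuclideanSpace ℝ (Fin 2) | ‖x‖ ≤ 1} : Set _)) ∧
      (∀ i : Fin n, Disjoint (interior A₀) (interior ((· + v i) '' A₀))) ∧
      (∀ i j : Fin n, i ≠ j →
        Disjoint (interior ((· + v i) '' A₀)) (interior ((· + v j) '' A₀))) ∧
      (∀ i : Fin n, (A₀ ∩ ((· + v i) '' A₀)).Nonempty) := by
  let N : ℝ := 4 * n + 2
  have hN : 4 * n + 2 ≤ N := le_rfl
  have hN1 : 1 ≤ N := one_le_of_four_mul_add_two_le hN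
  refine ⟨disk N n, fun i => offset N n i, isCompact_band (continuous_profile N n),
    nonempty_band_homeomorph_unitBall (continuous_profile N n) (by positivity),
    fun i => disjoint_interior_disk_translate hN1 i, fun i j hij => ?_,
    fun i => disk_inter_translate_nonempty hN i.isLt.le⟩
  rcases hij.lt_or_gt with hlt | hgt
  · exact disjoint_interior_translates hN hlt
  · exact (disjoint_interior_translates hN hgt).symm
end
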